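/- arXiv:2303.16979 — 2 statements merged into one kernel-verified Lean document; each statement's English description precedes it below -/
import Mathlib

section
/- Let n ≥ 1, ⋆ ∈ {+,−}^n, i ∈ {1,…,n}, and t ∈ [−1,1]^n with t_i = 1. Then the closed box of β^⋆_n(t) equals [1/2,1] times the product whose i-th factor is J(⋆_i) and whose j-th factor (j ≠ i) is [σ_{⋆_j}(t_j), −σ_{−⋆_j}(t_j)]; every open box indexed by ⋆' with ⋆'_i = −⋆_i equals [0,1]×∏_{j=1}^n J(⋆'_j) (the corresponding box of μ_n); and every open box indexed by ⋆' with ⋆'_i = ⋆_i equals [0, τ_{(⋆⋆')|_{j≠i}}((t_j)_{j≠i})]×∏_{j=1}^n J(⋆'_j). Equivalently, β^⋆_n(t) is the configuration obtained from ι_{{1,…,n}∖{i}}(μ_1) by open-type substitution of ι_{{i}}(μ_{n−1}) into its open box of sign −⋆_i and of ι_{{i}}(β^{(⋆_j)_{j≠i}}_{n−1}((t_j)_{j≠i})) into its open box of sign ⋆_i. (This is the facet identity d^+_i β^⋆_n = μ ∘ (μ, β) used in the proof that the chain η_n is closed.) -/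
/-- `J(+) = [0,1]`, `J(-) = [-1,0]`: lower endpoint (`true` is `+`, `false` is `-`). -/
def jLo (b : Bool) : ℝ := if b then 0 else -1

/-- `J(+) = [0,1]`, `J(-) = [-1,0]`: upper endpoint. -/
def jHi (b : Bool) : ℝ := if b then 1 else 0

/-- `σ_+(u) = min(0,u)` and `σ_-(u) = -1`. -/
noncomputable def sigmaF (b : Bool) (u : ℝ) : ℝ := if b then min 0 u else -1

/-- `τ_⋆(t) = max ({1/2} ∪ {(1 + t i)/2 : ⋆_i = -})`. -/
noncomputable def tauF {k : ℕ} (s : Fin k → Bool) (t : Fin k → ℝ) : ℝ :=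
  Finset.fold max (1/2) (fun i => if s i then (1/2 : ℝ) else (1 + t i) / 2) Finset.univ

/-- Lower endpoint vectors of the boxes of the configuration `β^s_k(t)`:
the closed box (index `none`) is `[1/2,1] × ∏_{i=1}^k [σ_{s i}(t i), -σ_{-(s i)}(t i)]`, and
the open box indexed by `some s'` is `[0, τ_{s·s'}(t)] × ∏_{i=1}^k J(s' i)`. -/
noncomputable def betaLo {k : ℕ} (s : Fin k → Bool) (t : Fin k → ℝ) :
    Option (Fin k → Bool) → Fin (k+1) → ℝ
  | none => Fin.cons (1/2) fun i => sigmaF (s i) (t i)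
  | some s' => Fin.cons 0 fun i => jLo (s' i)

/-- Upper endpoint vectors of the boxes of the configuration `β^s_k(t)`. -/
noncomputable def betaHi {k : ℕ} (s : Fin k → Bool) (t : Fin k → ℝ) :
    Option (Fin k → Bool) → Fin (k+1) → ℝ
  | none => Fin.cons 1 fun i => -sigmaF (!(s i)) (t i)
  | some s' => Fin.cons (tauF (fun i => s i == s' i) t) fun i => jHi (s' i)

/-- Lower endpoint vector of the box of `μ_k` indexed by the sign vector `s`. -/
def muLo {k : ℕ} (s : Fin k → Bool) : Fin (k+1) → ℝ := Fin.cons 0 fun i => jLo (s i)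

/-- Upper endpoint vector of the box of `μ_k` indexed by the sign vector `s`. -/
def muHi {k : ℕ} (s : Fin k → Bool) : Fin (k+1) → ℝ := Fin.cons 1 fun i => jHi (s i)

/-- The map `ψ_o` associated to an open-type box `o` recorded by its endpoint vectors. -/
noncomputable def psiV {n : ℕ} (lo hi : Fin (n+1) → ℝ) (x : Fin (n+1) → ℝ) :
    Fin (n+1) → ℝ :=
  Fin.cons (hi 0 * x 0) fun i =>
    lo i.succ + (hi i.succ - lo i.succ) * (x i.succ + 1) / 2

theorem tauF_split {m : ℕ} (i : Fin (m+1)) (s : Fin (m+1) → Bool) (t : Fin (m+1) → ℝ) :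
    tauF s t = max (if s i then (1/2 : ℝ) else (1 + t i) / 2)
      (tauF (i.removeNth s) (i.removeNth t)) := by
  unfold tauF
  rw [Fin.univ_succAbove m i, Finset.fold_cons, Finset.fold_map]
  rfl

theorem tauF_ge {m : ℕ} (s : Fin m → Bool) (t : Fin m → ℝ) : 1/2 ≤ tauF s t := by
  unfold tauF
  rw [Finset.le_fold_max]
  exact Or.inl le_rfl

theorem tauF_le {m : ℕ} (s : Fin m → Bool) (t : Fin m → ℝ) (ht : ∀ j, t j ≤ 1) :
    tauF s t ≤ 1 := by
  unfold tauF
  rw [Finset.fold_max_le]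
  refine ⟨by norm_num, fun j _ => ?_⟩
  have := ht j
  split_ifs <;> linarith

theorem tauF_neg {m : ℕ} (i : Fin (m+1)) (s : Fin (m+1) → Bool) (t : Fin (m+1) → ℝ)
    (ht : ∀ j, t j ≤ 1) (hti : t i = 1) (hs : s i = false) : tauF s t = 1 := by
  rw [tauF_split i, hs, hti]
  have := tauF_le (i.removeNth s) (i.removeNth t) (fun j => ht _)
  norm_num
  exact this

theorem tauF_pos {m : ℕ} (i : Fin (m+1)) (s : Fin (m+1) → Bool) (t : Fin (m+1) → ℝ)
    (hs : s i = true) : tauF s t = tauF (i.removeNth s) (i.removeNth t) := by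
  rw [tauF_split i, hs, if_pos rfl]
  exact max_eq_right (tauF_ge _ _)

theorem sigmaF_one (b : Bool) : sigmaF b 1 = jLo b := by
  cases b <;> simp [sigmaF, jLo]

theorem neg_sigmaF_one (b : Bool) : -sigmaF (!b) 1 = jHi b := by
  cases b <;> simp [sigmaF, jHi]

theorem psiV_insert {m : ℕ} (i : Fin (m+1)) (a b h c x : ℝ) (y : Fin m → ℝ)
    (z : Fin (m+1) → ℝ) (w : ℝ)
    (h0 : h = w) (hi : a + (b - a) * (x + 1) / 2 = z i)
    (hj : ∀ j, y j = z (i.succAbove j)) :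
    psiV (Fin.cons c fun j => if j = i then a else -1)
      (Fin.cons 1 fun j => if j = i then b else 1)
      (Fin.cons h (i.insertNth x y)) = Fin.cons w z := by
  unfold psiV
  congr 1
  · simpa using h0
  · funext j
    refine Fin.succAboveCases i ?_ (fun k => ?_) j
    · simpa using hi
    · have := hj k
      simp [Fin.succAbove_ne]
      linarith

/-- The facet `t_i = 1` of `β^s_n` (here `n = m + 1`; tail coordinates
`1, …, n` of `ℝ^{n+1}` are identified with `Fin (m+1)`, so `i : Fin (m+1)` denotes the
coordinate `i + 1`).  The closed box is `[1/2,1]` times the product with `i`-th factor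
`J(s i)` and `j`-th factor `[σ_{s j}(t j), -σ_{-(s j)}(t j)]` for `j ≠ i`; every open box
indexed by `s'` with `s'_i = -s_i` is the corresponding box of `μ_n`; and every open box
indexed by `s'` with `s'_i = s_i` is `[0, τ_{(s·s')|_{j≠i}}((t_j)_{j≠i})] × ∏ J(s' j)`.
Equivalently, `β^s_n(t)` is obtained from `ι_{{1,…,n}∖{i}}(μ_1)` by open-type substitution
of `ι_{{i}}(μ_{n-1})` into its open box of sign `-s_i` and of
`ι_{{i}}(β^{s∖i}_{n-1}((t_j)_{j≠i}))` into its open box of sign `s_i`. -/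
theorem stmt8 (m : ℕ) (s : Fin (m+1) → Bool) (i : Fin (m+1)) (t : Fin (m+1) → ℝ)
    (ht : ∀ j, t j ∈ Set.Icc (-1 : ℝ) 1) (hti : t i = 1) :
    -- explicit description of the facet
    (betaLo s t none =
        Fin.cons (1/2) (fun j => if j = i then jLo (s i) else sigmaF (s j) (t j)) ∧
     betaHi s t none =
        Fin.cons 1 (fun j => if j = i then jHi (s i) else -sigmaF (!(s j)) (t j)) ∧
     (∀ s' : Fin (m+1) → Bool, s' i = !(s i) →
        betaLo s t (some s') = muLo s' ∧ betaHi s t (some s') = muHi s') ∧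
     (∀ s' : Fin (m+1) → Bool, s' i = s i →
        betaLo s t (some s') = Fin.cons 0 (fun j => jLo (s' j)) ∧
        betaHi s t (some s') =
          Fin.cons (tauF (i.removeNth fun j => s j == s' j) (i.removeNth t))
            (fun j => jHi (s' j)))) ∧
    -- substitution description
    (∀ s'' : Fin m → Bool,
      -- the box of ι_{{i}}(μ_{n-1}) indexed by s'', substituted into the open box of
      -- ι_{{1,…,n}∖{i}}(μ_1) of sign -s_i
      (psiV
          (Fin.cons 0 fun j => if j = i then jLo (!(s i)) else -1)
          (Fin.cons 1 fun j => if j = i then jHi (!(s i)) else 1)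
          (Fin.cons 0 (i.insertNth (-1) fun j => jLo (s'' j)))
          = betaLo s t (some (i.insertNth (!(s i)) s'')) ∧
       psiV
          (Fin.cons 0 fun j => if j = i then jLo (!(s i)) else -1)
          (Fin.cons 1 fun j => if j = i then jHi (!(s i)) else 1)
          (Fin.cons 1 (i.insertNth 1 fun j => jHi (s'' j)))
          = betaHi s t (some (i.insertNth (!(s i)) s''))) ∧
      -- the open box of ι_{{i}}(β_{n-1}) indexed by s'', substituted into the open box of
      -- ι_{{1,…,n}∖{i}}(μ_1) of sign s_i
      (psiV
          (Fin.cons 0 fun j => if j = i then jLo (s i) else -1)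
          (Fin.cons 1 fun j => if j = i then jHi (s i) else 1)
          (Fin.cons 0 (i.insertNth (-1) fun j => jLo (s'' j)))
          = betaLo s t (some (i.insertNth (s i) s'')) ∧
       psiV
          (Fin.cons 0 fun j => if j = i then jLo (s i) else -1)
          (Fin.cons 1 fun j => if j = i then jHi (s i) else 1)
          (Fin.cons (tauF (fun j => i.removeNth s j == s'' j) (i.removeNth t))
            (i.insertNth 1 fun j => jHi (s'' j)))
          = betaHi s t (some (i.insertNth (s i) s''))) ∧
      -- the closed box of ι_{{i}}(β_{n-1}), substituted into the open box of
      -- ι_{{1,…,n}∖{i}}(μ_1) of sign s_i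
      (psiV
          (Fin.cons 0 fun j => if j = i then jLo (s i) else -1)
          (Fin.cons 1 fun j => if j = i then jHi (s i) else 1)
          (Fin.cons (1/2)
            (i.insertNth (-1) fun j => sigmaF (i.removeNth s j) (i.removeNth t j)))
          = betaLo s t none ∧
       psiV
          (Fin.cons 0 fun j => if j = i then jLo (s i) else -1)
          (Fin.cons 1 fun j => if j = i then jHi (s i) else 1)
          (Fin.cons 1
            (i.insertNth 1 fun j => -sigmaF (!(i.removeNth s j)) (i.removeNth t j)))
          = betaHi s t none)) := by
  have ht1 : ∀ j, t j ≤ 1 := fun j => (ht j).2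
  refine ⟨⟨?_, ?_, fun s' hs' => ⟨rfl, ?_⟩, fun s' hs' => ⟨rfl, ?_⟩⟩, fun s'' =>
    ⟨⟨?_, ?_⟩, ⟨?_, ?_⟩, ⟨?_, ?_⟩⟩⟩
  · unfold betaLo
    simp only
    congr 1
    funext j
    split_ifs with h
    · rw [h, hti, sigmaF_one]
    · rfl
  · unfold betaHi
    simp only
    congr 1
    funext j
    split_ifs with h
    · rw [h, hti, neg_sigmaF_one]
    · rfl
  · unfold betaHi muHi
    simp only
    rw [tauF_neg i _ t ht1 hti (by simp [hs'])]
  · unfold betaHi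
    simp only
    rw [tauF_pos i _ t (by simp [hs'])]
  · exact psiV_insert i _ _ _ _ _ _ _ _ rfl (by simp) (fun j => by simp)
  · refine psiV_insert i _ _ _ _ _ _ _ _ ?_ (by simp; ring) (fun j => by simp)
    exact (tauF_neg i _ t ht1 hti (by simp)).symm
  · exact psiV_insert i _ _ _ _ _ _ _ _ rfl (by simp) (fun j => by simp)
  · refine psiV_insert i _ _ _ _ _ _ _ _ ?_ (by simp; ring) (fun j => by simp)
    rw [tauF_pos i _ t (by simp)]
    congr 1
    funext j
    simp [Fin.removeNth]
  · exact psiV_insert i _ _ _ _ _ _ _ _ rfl (by simp [hti, sigmaF_one]) (fun j => rfl)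
  · refine psiV_insert i _ _ _ _ _ _ _ _ rfl ?_ (fun j => rfl)
    rw [hti, neg_sigmaF_one]
    ring
end

section
/- Let n ≥ 1 and let S = {x ∈ ℝ^{n+1} : max_{0≤i≤n} |x_i| = 1} be the boundary of the cube [−1,1]^{n+1}. Define h : S → ℝ^{n+1} by h(x_0,x_1,…,x_n) = (x_0·(1 − max_{1≤i≤n} |x_i|), −x_1, …, −x_n). Then h is continuous, h(x) ≠ 0 for all x ∈ S, h(−x) = −h(x) for all x ∈ S, and h, viewed as a map S → ℝ^{n+1}∖{0}, is not homotopic to a constant map. -/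
/-- The boundary `S` of the cube `[-1,1]^{n+1}`: points with `max_{0 ≤ i ≤ n} |x_i| = 1`
(homeomorphic to the `n`-sphere). -/
def cubeBdry (m : ℕ) : Set (Fin (m+2) → ℝ) :=
  {x | Finset.fold max 0 (fun i => |x i|) Finset.univ = 1}

/-- The difference-of-centers map
`h(x₀, x₁, …, x_n) = (x₀ · (1 - max_{1 ≤ i ≤ n} |x_i|), -x₁, …, -x_n)` of the spherical
`n`-cycle `ℓ_n` (here `n = m + 1`, coordinates indexed by `Fin (m+2)`). -/
noncomputable def hMap (m : ℕ) (x : Fin (m+2) → ℝ) : Fin (m+2) → ℝ :=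
  Fin.cons
    (x 0 * (1 - Finset.fold max 0 (fun i : Fin (m+1) => |x i.succ|) Finset.univ))
    (fun i => -x i.succ)

open MeasureTheory Set Metric Polynomial

abbrev EE (N : ℕ) := EuclideanSpace ℝ (Fin N)

lemma aux_poly {N : ℕ} (A : EE N →L[ℝ] EE N) :
    ∃ p : ℝ[X], p.degree < (N + 1 : ℕ) ∧
      ∀ t : ℝ, p.eval t = (ContinuousLinearMap.id ℝ (EE N) + t • A).det := by
  let b := (EuclideanSpace.basisFun (Fin N) ℝ).toBasis
  let M := LinearMap.toMatrix b b (A : EE N →ₗ[ℝ] EE N)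
  refine ⟨Matrix.det ((X : ℝ[X]) • M.map C + (1 : Matrix (Fin N) (Fin N) ℝ).map C), ?_, ?_⟩
  · refine lt_of_le_of_lt Polynomial.degree_le_natDegree ?_
    have := Polynomial.natDegree_det_X_add_C_le M 1
    rw [Fintype.card_fin] at this
    exact_mod_cast Nat.lt_succ_of_le this
  · intro t
    rw [ContinuousLinearMap.det, ← LinearMap.det_toMatrix b]
    rw [← Polynomial.coe_evalRingHom, RingHom.map_det]
    congr 1
    have : ((ContinuousLinearMap.id ℝ (EE N) + t • A : EE N →L[ℝ] EE N) : EE N →ₗ[ℝ] EE N)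
      = LinearMap.id + t • (A : EE N →ₗ[ℝ] EE N) := rfl
    have h2 : LinearMap.toMatrix b b (LinearMap.id + t • (A : EE N →ₗ[ℝ] EE N)) = 1 + t • M := by
      rw [map_add (LinearMap.toMatrix b b), map_smul (LinearMap.toMatrix b b),
        LinearMap.toMatrix_id]
    rw [this, h2]
    ext i j
    by_cases hij : i = j <;> simp [hij] <;> ring

lemma aux_pos {N : ℕ} (A : EE N →L[ℝ] EE N) (t : ℝ) (ht : 0 ≤ t) (h : t * ‖A‖ < 1) :
    0 < (ContinuousLinearMap.id ℝ (EE N) + t • A).det := by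
  obtain ⟨p, -, hp⟩ := aux_poly A
  have hne : ∀ s ∈ Icc 0 t, p.eval s ≠ 0 := by
    intro s hs h0
    rw [hp, ContinuousLinearMap.det] at h0
    obtain ⟨v, hv, hv0⟩ := Submodule.exists_mem_ne_zero_of_ne_bot
      ((LinearMap.bot_lt_ker_of_det_eq_zero h0).ne')
    have h1 : v + s • A v = 0 := by simpa using hv
    have h2 : ‖v‖ = s * ‖A v‖ := by
      conv_lhs => rw [eq_neg_of_add_eq_zero_left h1, norm_neg, norm_smul, Real.norm_of_nonneg hs.1]
    have h3 := A.le_opNorm v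
    have h4 : 0 < ‖v‖ := norm_pos_iff.2 hv0
    have h5 : s * ‖A v‖ ≤ t * (‖A‖ * ‖v‖) :=
      mul_le_mul hs.2 h3 (norm_nonneg _) ht
    nlinarith
  rw [← hp]
  by_contra hle
  push Not at hle
  have h01 : p.eval 0 = 1 := by rw [hp]; simp [ContinuousLinearMap.det]
  obtain ⟨s, hs, hs0⟩ := intermediate_value_Icc' ht (p.continuous.continuousOn)
    (show (0:ℝ) ∈ Icc (p.eval t) (p.eval 0) from ⟨hle, by rw [h01]; norm_num⟩)
  exact hne s hs hs0

lemma aux_int {N : ℕ} (φ : EE N → EE N) (φ' : EE N → EE N →L[ℝ] EE N) (K : NNReal)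
    (R : ℝ) (hK : LipschitzWith K φ) (h0 : ∀ x, x ∉ ball (0 : EE N) R → φ x = 0)
    (hd : ∀ x ∈ ball (0 : EE N) R, HasFDerivAt φ (φ' x) x) (t : ℝ) (ht : 0 ≤ t) (htK : t * K < 1) :
    IntegrableOn (fun x => (ContinuousLinearMap.id ℝ (EE N) + t • φ' x).det) (ball 0 R) ∧
    ∫ x in ball (0 : EE N) R, (ContinuousLinearMap.id ℝ (EE N) + t • φ' x).det
      = volume.real (ball (0 : EE N) R) := by
  set F : EE N → EE N := fun x => x + t • φ x with hF
  have hinj : Function.Injective F := by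
    intro x y hxy
    have h1 : x - y = t • (φ y - φ x) := by
      simp only [hF] at hxy
      rw [smul_sub, sub_eq_sub_iff_add_eq_add, hxy, add_comm]
    have h2 := hK.dist_le_mul y x
    have h3 : ‖x - y‖ = t * ‖φ y - φ x‖ := by
      conv_lhs => rw [h1]
      rw [norm_smul, Real.norm_of_nonneg ht]
    rw [dist_eq_norm, dist_eq_norm, norm_sub_rev y x] at h2
    by_contra hne
    have h4 : 0 < ‖x - y‖ := norm_pos_iff.2 (sub_ne_zero.2 hne)
    nlinarith
  have hsurj : Function.Surjective F := by
    intro y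
    have hc : ContractingWith (Real.toNNReal t * K) (fun x => y - t • φ x) := by
      constructor
      · rw [← NNReal.coe_lt_coe]; simpa [ht] using htK
      · apply LipschitzWith.of_dist_le_mul
        intro a b
        have := hK.dist_le_mul a b
        rw [dist_sub_left, dist_smul₀, Real.norm_of_nonneg ht]
        simp only [NNReal.coe_mul, Real.coe_toNNReal _ ht]
        rw [mul_assoc]
        exact mul_le_mul_of_nonneg_left this ht
    refine ⟨hc.fixedPoint, ?_⟩
    have := hc.fixedPoint_isFixedPt
    simp only [Function.IsFixedPt] at this
    simp only [hF]
    conv_lhs => enter [1]; rw [← this]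
    simp
  have hout : ∀ x, x ∉ ball (0 : EE N) R → F x = x := fun x hx => by simp [hF, h0 x hx]
  have himg : F '' ball 0 R = ball 0 R := by
    ext y
    constructor
    · rintro ⟨x, hx, rfl⟩
      by_contra hy
      have := hinj (hout _ hy)
      rw [this] at hy
      exact hy hx
    · intro hy
      obtain ⟨x, rfl⟩ := hsurj y
      refine ⟨x, ?_, rfl⟩
      by_contra hx
      rw [hout x hx] at hy
      exact hx hy
  have hder : ∀ x ∈ ball (0 : EE N) R, HasFDerivWithinAt F
      (ContinuousLinearMap.id ℝ (EE N) + t • φ' x) (ball 0 R) x := fun x hx =>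
    ((hasFDerivAt_id x).add ((hd x hx).const_smul t)).hasFDerivWithinAt
  have hpos : ∀ x ∈ ball (0 : EE N) R,
      0 < (ContinuousLinearMap.id ℝ (EE N) + t • φ' x).det := by
    intro x hx
    apply aux_pos _ _ ht
    have : ‖φ' x‖ ≤ K := (hd x hx).le_of_lipschitz hK
    exact lt_of_le_of_lt (mul_le_mul_of_nonneg_left this ht) htK
  have e1 := integrableOn_image_iff_integrableOn_abs_det_fderiv_smul volume
    measurableSet_ball hder hinj.injOn (fun _ => (1:ℝ))
  have e2 := integral_image_eq_integral_abs_det_fderiv_smul volume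
    measurableSet_ball hder hinj.injOn (fun _ => (1:ℝ))
  rw [himg] at e1 e2
  have hcong : EqOn (fun x => |(ContinuousLinearMap.id ℝ (EE N) + t • φ' x).det| • (1:ℝ))
      (fun x => (ContinuousLinearMap.id ℝ (EE N) + t • φ' x).det) (ball 0 R) := by
    intro x hx
    simp [abs_of_pos (hpos x hx)]
  rw [integrableOn_congr_fun hcong measurableSet_ball] at e1
  rw [setIntegral_congr_fun measurableSet_ball hcong] at e2
  refine ⟨e1.1 ?_, ?_⟩
  · exact integrableOn_const measure_ball_lt_top.ne
  · rw [← e2]; simp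

lemma aux_one {N : ℕ} (φ : EE N → EE N) (φ' : EE N → EE N →L[ℝ] EE N) (K : NNReal)
    (R : ℝ) (hK : LipschitzWith K φ) (h0 : ∀ x, x ∉ ball (0 : EE N) R → φ x = 0)
    (hd : ∀ x ∈ ball (0 : EE N) R, HasFDerivAt φ (φ' x) x) :
    ∫ x in ball (0 : EE N) R, (ContinuousLinearMap.id ℝ (EE N) + φ' x).det
      = volume.real (ball (0 : EE N) R) := by
  let s := Finset.range (N + 1)
  let v : ℕ → ℝ := fun k => (1 / (((K : ℝ) + 1) * (N + 1))) * k
  have hc : 0 < 1 / (((K : ℝ) + 1) * (N + 1)) := by positivity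
  have hv : InjOn v s := by
    intro a _ b _ hab
    have := mul_left_cancel₀ hc.ne' hab
    exact_mod_cast this
  have hv0 : ∀ k, 0 ≤ v k := fun k => by positivity
  have hv1 : ∀ k ∈ s, v k * K < 1 := by
    intro k hk
    have hk' : (k : ℝ) ≤ N := by exact_mod_cast Nat.lt_succ_iff.1 (Finset.mem_range.1 hk)
    have hKn : (0:ℝ) ≤ K := K.2
    simp only [v]
    rw [div_mul_eq_mul_div, one_mul, div_mul_eq_mul_div, div_lt_one (by positivity)]
    nlinarith
  let w : ℕ → ℝ := fun k => (Lagrange.basis s v k).eval 1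
  have hw : ∑ k ∈ s, w k = 1 := by
    simp only [w]
    rw [← eval_finsetSum, Lagrange.sum_basis hv ⟨0, by simp [s]⟩, eval_one]
  have hkey : ∀ x, (ContinuousLinearMap.id ℝ (EE N) + φ' x).det =
      ∑ k ∈ s, w k * (ContinuousLinearMap.id ℝ (EE N) + v k • φ' x).det := by
    intro x
    obtain ⟨p, hdeg, hp⟩ := aux_poly (φ' x)
    have h1 := Lagrange.eq_interpolate hv (f := p) (by simpa [s] using hdeg)
    have h2 := hp 1
    rw [one_smul] at h2
    rw [← h2]
    conv_lhs => rw [h1]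
    rw [Lagrange.interpolate_apply, eval_finsetSum]
    refine Finset.sum_congr rfl fun k _ => ?_
    rw [eval_mul, eval_C, hp, mul_comm]
  simp_rw [hkey]
  rw [integral_finsetSum]
  · rw [Finset.sum_congr rfl (g := fun k => w k * volume.real (ball (0 : EE N) R))]
    · rw [← Finset.sum_mul, hw, one_mul]
    · intro k hk
      rw [integral_const_mul, (aux_int φ φ' K R hK h0 hd (v k) (hv0 k) (hv1 k hk)).2]
  · intro k hk
    exact (aux_int φ φ' K R hK h0 hd (v k) (hv0 k) (hv1 k hk)).1.const_mul _

lemma aux_noretract {N : ℕ} (r : EE N → EE N) (R : ℝ) (hR : 0 < R) (hr : ContDiff ℝ 1 r)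
    (hn : ∀ x, ‖r x‖ = R) (hid : ∀ x, ‖x‖ = R → r x = x) : False := by
  classical
  let ψ : EE N → EE N := fun x => r x - x
  have hψ : ContDiff ℝ 1 ψ := hr.sub contDiff_id
  obtain ⟨K, hK⟩ := (hψ.contDiffOn (s := closedBall (0 : EE N) R)).exists_lipschitzOnWith
    one_ne_zero (convex_closedBall _ _) (isCompact_closedBall _ _)
  let φ : EE N → EE N := fun x => if ‖x‖ ≤ R then ψ x else 0
  have hcross : ∀ x y : EE N, ‖x‖ ≤ R → R < ‖y‖ → dist (ψ x) 0 ≤ K * dist x y := by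
    intro x y hx hy
    have hcont : ContinuousOn (fun s : ℝ => ‖AffineMap.lineMap x y s‖) (Icc (0:ℝ) 1) :=
      (AffineMap.lineMap_continuous.norm).continuousOn
    obtain ⟨s, hs, hsR⟩ := intermediate_value_Icc zero_le_one hcont
      (show R ∈ Icc _ _ by simpa using ⟨hx, hy.le⟩)
    have hz : ψ (AffineMap.lineMap x y s) = 0 := by
      simp only [ψ]; rw [hid _ hsR, sub_self]
    have h1 := hK.dist_le_mul x (by simpa using hx) (AffineMap.lineMap x y s)
      (by simpa using hsR.le)
    rw [hz, dist_left_lineMap, Real.norm_of_nonneg hs.1] at h1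
    refine h1.trans ?_
    have := dist_nonneg (x := x) (y := y)
    have hs1 := hs.2
    gcongr
    nlinarith
  have hKφ : LipschitzWith K φ := by
    apply LipschitzWith.of_dist_le_mul
    intro x y
    simp only [φ]
    split_ifs with hx hy hy
    · exact hK.dist_le_mul x (by simpa using hx) y (by simpa using hy)
    · exact hcross x y hx (not_le.1 hy)
    · rw [dist_comm, dist_comm x]; exact hcross y x hy (not_le.1 hx)
    · simp; positivity
  have h0 : ∀ x, x ∉ ball (0 : EE N) R → φ x = 0 := by
    intro x hx
    simp only [mem_ball_zero_iff, not_lt] at hx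
    simp only [φ]
    split_ifs with h
    · simp only [ψ]; rw [hid _ (le_antisymm h hx), sub_self]
    · rfl
  have hdr : ∀ x, HasFDerivAt r (fderiv ℝ r x) x := fun x =>
    (hr.differentiable one_ne_zero x).hasFDerivAt
  have hd : ∀ x ∈ ball (0 : EE N) R,
      HasFDerivAt φ (fderiv ℝ r x - ContinuousLinearMap.id ℝ (EE N)) x := by
    intro x hx
    refine ((hdr x).sub (hasFDerivAt_id x)).congr_of_eventuallyEq ?_
    filter_upwards [isOpen_ball.mem_nhds hx] with y hy
    have : ‖y‖ ≤ R := by simpa using (mem_ball_zero_iff.1 hy).le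
    simp [φ, ψ, this]
  have key := aux_one φ _ K R hKφ h0 hd
  have hz : ∀ x, (fderiv ℝ r x).det = 0 := by
    intro x
    by_contra hne
    have hu : IsUnit (LinearMap.det (fderiv ℝ r x : EE N →ₗ[ℝ] EE N)) := isUnit_iff_ne_zero.2 hne
    have hsurj : Function.Surjective (fderiv ℝ r x : EE N →ₗ[ℝ] EE N) :=
      ((Module.End.isUnit_iff _).1 ((LinearMap.isUnit_iff_isUnit_det _).2 hu)).2
    obtain ⟨v, hv⟩ := hsurj (r x)
    have hv' : fderiv ℝ r x v = r x := hv
    have h1 := (hdr x).norm_sq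
    have h2 : (fun x => ‖r x‖ ^ 2) = fun _ => R ^ 2 := by funext y; rw [hn]
    rw [h2] at h1
    have h3 := h1.unique (hasFDerivAt_const (R ^ 2) x)
    have h4 := congrArg (fun L => L v) h3
    simp [hv', hn] at h4
    exact hR.ne' h4
  simp only [add_sub_cancel, hz, integral_zero] at key
  have : 0 < volume.real (ball (0 : EE N) R) :=
    ENNReal.toReal_pos (measure_ball_pos _ _ hR).ne' measure_ball_lt_top.ne
  linarith

lemma aux_nonvanish {N : ℕ} (G : EE N → EE N) (R : ℝ) (hG : Continuous G)
    (hne : ∀ x, G x ≠ 0) (hid : ∀ x, R ≤ ‖x‖ → G x = x) : False := by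
  set R' := max R 1 with hR'
  have hR1 : 0 < R' := lt_of_lt_of_le one_pos (le_max_right _ _)
  obtain ⟨g, hg, hclose, hsupp⟩ := (show Continuous (fun x => G x - x) from
    hG.sub continuous_id).exists_contDiff_approx 1
    (ε := fun x => ‖G x‖) hG.norm (fun x => norm_pos_iff.2 (hne x))
  have hf0 : ∀ x, x + g x ≠ 0 := by
    intro x hx
    have := hclose x
    rw [dist_eq_norm] at this
    have h2 : g x - (G x - x) = - G x := by
      rw [eq_neg_of_add_eq_zero_right hx]; abel
    simp [h2] at this
  have hg0 : ∀ x, R ≤ ‖x‖ → g x = 0 := by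
    intro x hx
    by_contra h
    have := hsupp h
    simp [hid x hx] at this
  have hf : ContDiff ℝ 1 (fun x => x + g x) := contDiff_id.add hg
  refine aux_noretract (fun x => (R' * ‖x + g x‖⁻¹) • (x + g x)) R' hR1 ?_ ?_ ?_
  · exact (contDiff_const.mul ((hf.norm ℝ hf0).inv fun x => norm_ne_zero_iff.2 (hf0 x))).smul hf
  · intro x
    have := norm_pos_iff.2 (hf0 x)
    rw [norm_smul, Real.norm_of_nonneg (by positivity)]
    field_simp
  · intro x hx
    have h1 : g x = 0 := hg0 x (by rw [hx]; exact le_max_left _ _)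
    simp only [h1, add_zero, hx]
    rw [mul_inv_cancel₀ hR1.ne', one_smul]

lemma aux_nonvanish' {N : ℕ} (G : (Fin N → ℝ) → (Fin N → ℝ)) (hG : Continuous G)
    (hne : ∀ x, G x ≠ 0) (hid : ∀ x, 1 ≤ ‖x‖ → G x = x) : False := by
  let e := EuclideanSpace.equiv (Fin N) ℝ
  have hb : Bornology.IsBounded (e.symm '' closedBall (0 : Fin N → ℝ) 1) :=
    ((isCompact_closedBall _ _).image e.symm.continuous).isBounded
  obtain ⟨R, hR⟩ := hb.exists_norm_le
  refine aux_nonvanish (fun x => e.symm (G (e x))) (R + 1)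
    (e.symm.continuous.comp (hG.comp e.continuous)) ?_ ?_
  · intro x h
    exact hne _ (by simpa using h)
  · intro x hx
    have : 1 ≤ ‖e x‖ := by
      by_contra h
      push Not at h
      have := hR x ⟨e x, by simpa using h.le, by simp⟩
      linarith
    simp only [hid _ this, ContinuousLinearEquiv.symm_apply_apply]

lemma fold_eq_norm {N : ℕ} (x : Fin N → ℝ) :
    Finset.fold max 0 (fun i => |x i|) Finset.univ = ‖x‖ := by
  refine eq_of_forall_ge_iff fun c => ?_
  rw [Finset.fold_max_le]
  constructor
  · rintro ⟨h0, h⟩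
    exact (pi_norm_le_iff_of_nonneg h0).2 fun i => by simpa using h i (Finset.mem_univ i)
  · intro h
    have h0 : 0 ≤ c := (norm_nonneg _).trans h
    exact ⟨h0, fun i _ => by simpa using (pi_norm_le_iff_of_nonneg h0).1 h i⟩

lemma aux_notnull {N : ℕ} (S : Set (Fin N → ℝ)) (hS : S = {x | ‖x‖ = 1})
    (f : C(↥S, ↥({y : Fin N → ℝ | y ≠ 0}))) (hf : ∀ x, (f x : Fin N → ℝ) = x)
    (y : ↥({y : Fin N → ℝ | y ≠ 0})) (H : f.Homotopic (ContinuousMap.const _ y)) : False := by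
  subst hS
  obtain ⟨H⟩ := H
  have hcl : Topology.IsClosedEmbedding (Prod.map id Subtype.val :
      unitInterval × ↥({x : Fin N → ℝ | ‖x‖ = 1}) → unitInterval × (Fin N → ℝ)) :=
    Topology.IsClosedEmbedding.id.prodMap
      (isClosed_eq continuous_norm continuous_const).isClosedEmbedding_subtypeVal
  let H0 : C(unitInterval × ↥({x : Fin N → ℝ | ‖x‖ = 1}), Fin N → ℝ) :=
    ⟨fun p => (H p : Fin N → ℝ), by fun_prop⟩
  obtain ⟨K, hK⟩ := H0.exists_extension' hcl
  have hK' : ∀ (t : unitInterval) (x : Fin N → ℝ) (hx : ‖x‖ = 1),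
      K (t, x) = (H (t, ⟨x, hx⟩) : Fin N → ℝ) := by
    intro t x hx
    exact congrFun hK (t, ⟨x, hx⟩)
  let A : (Fin N → ℝ) → (Fin N → ℝ) := fun x =>
    K (projIcc 0 1 zero_le_one (2 - 2 * ‖x‖), (max ‖x‖ (1/2))⁻¹ • x)
  have hA : Continuous A := by
    have h1 : Continuous (fun x : Fin N → ℝ => (max ‖x‖ (1/2))⁻¹) :=
      (continuous_norm.max continuous_const).inv₀ fun x =>
        (lt_of_lt_of_le (by norm_num) (le_max_right _ _) : (0:ℝ) < _).ne'
    have h2 : Continuous (fun x : Fin N → ℝ => projIcc (0:ℝ) 1 zero_le_one (2 - 2 * ‖x‖)) :=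
      continuous_projIcc.comp (by fun_prop)
    exact K.continuous.comp (h2.prodMk (h1.smul continuous_id))
  have hnorm : ∀ x : Fin N → ℝ, 1/2 ≤ ‖x‖ → ‖(max ‖x‖ (1/2))⁻¹ • x‖ = 1 := by
    intro x hx
    rw [max_eq_left hx, norm_smul, norm_inv, norm_norm]
    exact inv_mul_cancel₀ (by linarith)
  have hAv : ∀ x : Fin N → ℝ, ∀ hx : 1/2 ≤ ‖x‖, A x =
      (H (projIcc 0 1 zero_le_one (2 - 2 * ‖x‖), ⟨_, hnorm x hx⟩) : Fin N → ℝ) :=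
    fun x hx => hK' _ _ (hnorm x hx)
  refine aux_nonvanish' (fun x => if ‖x‖ ≤ 1/2 then (y : Fin N → ℝ)
    else if ‖x‖ ≤ 1 then A x else x) ?_ ?_ ?_
  · refine Continuous.if_le continuous_const
      (Continuous.if_le hA continuous_id continuous_norm continuous_const ?_)
      continuous_norm continuous_const ?_
    · intro x hx
      have hp : projIcc (0:ℝ) 1 zero_le_one (2 - 2 * ‖x‖) = 0 :=
        projIcc_of_le_left _ (by linarith)
      rw [hAv x (by linarith), hp, H.apply_zero, hf]
      simp [hx]
      norm_num
    · intro x hx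
      have hp : projIcc (0:ℝ) 1 zero_le_one (2 - 2 * ‖x‖) = 1 :=
        projIcc_of_right_le _ (by linarith)
      rw [if_pos (by linarith), hAv x (by linarith), hp, H.apply_one]
      simp
  · intro x
    split_ifs with h1 h2
    · exact y.2
    · rw [hAv x (by linarith)]
      exact (H _).2
    · intro h
      simp [h] at h1
  · intro x hx
    rw [if_neg (by linarith)]
    split_ifs with h2
    · have hx1 : ‖x‖ = 1 := le_antisymm h2 hx
      have hp : projIcc (0:ℝ) 1 zero_le_one (2 - 2 * ‖x‖) = 0 :=
        projIcc_of_le_left _ (by linarith)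
      rw [hAv x (by linarith), hp, H.apply_zero, hf]
      simp [hx1]
      norm_num
    · rfl

lemma cubeBdry_eq (m : ℕ) : cubeBdry m = {x | ‖x‖ = 1} := by
  ext x
  simp only [cubeBdry, mem_ofPred_eq, fold_eq_norm]

/-- the reflection fixing coordinate zero -/
def reflMap (m : ℕ) (x : Fin (m+2) → ℝ) : Fin (m+2) → ℝ :=
  Fin.cons (x 0) (fun i => -x i.succ)

/-- straight-line homotopy from the reflected `hMap` to the identity -/
noncomputable def lineMapH (m : ℕ) (s : ℝ) (x : Fin (m+2) → ℝ) : Fin (m+2) → ℝ :=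
  Fin.cons (x 0 * (1 - s * ‖fun i : Fin (m+1) => x i.succ‖)) (fun i => x i.succ)

lemma hMap_eq (m : ℕ) (x : Fin (m+2) → ℝ) : hMap m x =
    Fin.cons (x 0 * (1 - ‖fun i : Fin (m+1) => x i.succ‖)) (fun i => -x i.succ) := by
  rw [hMap, fold_eq_norm (fun i : Fin (m+1) => x i.succ)]

lemma refl_hMap (m : ℕ) (x : Fin (m+2) → ℝ) : reflMap m (hMap m x) = lineMapH m 1 x := by
  rw [hMap_eq]
  simp [reflMap, lineMapH]

lemma refl_zero (m : ℕ) : reflMap m 0 = 0 := by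
  ext i
  refine Fin.cases ?_ (fun j => ?_) i <;> simp [reflMap]

lemma refl_refl (m : ℕ) (x : Fin (m+2) → ℝ) : reflMap m (reflMap m x) = x := by
  ext i
  refine Fin.cases ?_ (fun j => ?_) i <;> simp [reflMap]

lemma refl_ne (m : ℕ) (x : Fin (m+2) → ℝ) (hx : x ≠ 0) : reflMap m x ≠ 0 := by
  intro h
  apply hx
  rw [← refl_refl m x, h, refl_zero]

lemma line_zero (m : ℕ) (x : Fin (m+2) → ℝ) : lineMapH m 0 x = x := by
  ext i
  refine Fin.cases ?_ (fun j => ?_) i <;> simp [lineMapH]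

lemma line_ne (m : ℕ) (s : ℝ) (x : Fin (m+2) → ℝ) (hx : x ≠ 0) : lineMapH m s x ≠ 0 := by
  intro h
  have hs : (fun i : Fin (m+1) => x i.succ) = 0 := by
    ext i
    simpa [lineMapH] using congrFun h i.succ
  have h0 := congrFun h 0
  simp [lineMapH, hs] at h0
  apply hx
  ext i
  refine Fin.cases h0 (fun j => congrFun hs j) i

lemma continuous_finCons {X : Type*} [TopologicalSpace X] {k : ℕ} {a : X → ℝ}
    {b : X → Fin k → ℝ} (ha : Continuous a) (hb : Continuous b) :
    Continuous (fun x => (Fin.cons (a x) (b x) : Fin (k+1) → ℝ)) := by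
  refine continuous_pi fun i => ?_
  refine Fin.cases ?_ (fun j => ?_) i
  · simpa using ha
  · simpa using (continuous_apply j).comp' hb

lemma refl_cont (m : ℕ) : Continuous (reflMap m) :=
  continuous_finCons (by fun_prop) (by fun_prop)

lemma line_cont (m : ℕ) : Continuous (fun p : ℝ × (Fin (m+2) → ℝ) => lineMapH m p.1 p.2) :=
  continuous_finCons (by fun_prop) (by fun_prop)


/-- For `n ≥ 1` (here `n = m + 1`), the map `h` is continuous on the
boundary `S` of the cube `[-1,1]^{n+1}`, nowhere vanishing on `S`, odd (`h(-x) = -h(x)`), and,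
viewed as a map `S → ℝ^{n+1} ∖ {0}`, is not homotopic to a constant map.  (This witnesses
that the homology class of `ℓ_n` generates `H_n(C_{n+1}(2))`.) -/
theorem stmt11 (m : ℕ) :
    ContinuousOn (hMap m) (cubeBdry m) ∧
    (∀ x ∈ cubeBdry m, hMap m x ≠ 0) ∧
    (∀ x ∈ cubeBdry m, -x ∈ cubeBdry m ∧ hMap m (-x) = -hMap m x) ∧
    (∀ f : C(↥(cubeBdry m), ↥({y : Fin (m+2) → ℝ | y ≠ 0})),
      (∀ x : ↥(cubeBdry m), (f x : Fin (m+2) → ℝ) = hMap m x) →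
      ∀ y : ↥({y : Fin (m+2) → ℝ | y ≠ 0}),
        ¬ f.Homotopic (ContinuousMap.const _ y)) := by
  have hS := cubeBdry_eq m
  have hcont : Continuous (hMap m) := by
    have : hMap m = fun x => Fin.cons (x 0 * (1 - ‖fun i : Fin (m+1) => x i.succ‖))
        (fun i => -x i.succ) := funext (hMap_eq m)
    rw [this]
    exact continuous_finCons (by fun_prop) (by fun_prop)
  have hx0 : ∀ x ∈ cubeBdry m, x ≠ 0 := by
    rintro x hx rfl
    rw [hS] at hx
    simp at hx
  refine ⟨hcont.continuousOn, ?_, ?_, ?_⟩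
  · intro x hx h
    apply line_ne m 1 x (hx0 x hx)
    rw [← refl_hMap, h, refl_zero]
  · intro x hx
    refine ⟨?_, ?_⟩
    · rw [hS] at hx ⊢
      simpa using hx
    · rw [hMap_eq, hMap_eq]
      have : (fun i : Fin (m+1) => (-x) i.succ) = -(fun i : Fin (m+1) => x i.succ) := rfl
      rw [this, norm_neg]
      ext i
      refine Fin.cases ?_ (fun j => ?_) i <;> simp
  · intro f hf y hfy
    let ρ : C(↥({y : Fin (m+2) → ℝ | y ≠ 0}), ↥({y : Fin (m+2) → ℝ | y ≠ 0})) :=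
      ⟨fun z => ⟨reflMap m z, refl_ne m z z.2⟩,
        Continuous.subtype_mk ((refl_cont m).comp continuous_subtype_val) _⟩
    let ι : C(↥(cubeBdry m), ↥({y : Fin (m+2) → ℝ | y ≠ 0})) :=
      ⟨fun x => ⟨x, hx0 x x.2⟩, Continuous.subtype_mk continuous_subtype_val _⟩
    have h1 : ι.Homotopic (ρ.comp f) := by
      refine ⟨⟨⟨fun p => ⟨lineMapH m p.1 p.2, line_ne m _ _ (hx0 _ p.2.2)⟩, ?_⟩, ?_, ?_⟩⟩
      · refine Continuous.subtype_mk ?_ _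
        exact (line_cont m).comp (f := fun p : unitInterval × ↥(cubeBdry m) =>
          ((p.1 : ℝ), (p.2 : Fin (m+2) → ℝ))) (by fun_prop)
      · intro x
        apply Subtype.ext
        simpa [ι] using line_zero m x
      · intro x
        apply Subtype.ext
        simp [ρ, hf, refl_hMap]
    have h2 : (ρ.comp f).Homotopic (ContinuousMap.const _ (ρ y)) := by
      have := (ContinuousMap.Homotopic.refl ρ).comp hfy
      simpa using this
    exact aux_notnull (cubeBdry m) hS ι (fun _ => rfl) (ρ y) (h1.trans h2)
end
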